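/- The dimension of the null space of the data-driven Hodge Laplacian equals the dimension of the corresponding homology: dim ker(Δ1) = dim ker(d1) − dim im(d0), i.e. dim ker(Δ1) equals the dimension of the quotient space ker(d1)/im(d0). -/

import Mathlib

open Matrix

/-- Data-driven coboundary `d_k := B_{k+1} δ_k B_k⁻¹`. -/
noncomputable def dd {m n : ℕ} (δ : Matrix (Fin m) (Fin n) ℝ)
    (bl : Fin n → ℝ) (bu : Fin m → ℝ) : Matrix (Fin m) (Fin n) ℝ :=
  Matrix.diagonal bu * δ * (Matrix.diagonal bl)⁻¹

/-- Data-driven codifferential `d_k^* := D_k⁻¹ δ_kᵀ D_{k+1}`. -/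
noncomputable def dds {m n : ℕ} (δ : Matrix (Fin m) (Fin n) ℝ)
    (dl : Fin n → ℝ) (du : Fin m → ℝ) : Matrix (Fin n) (Fin m) ℝ :=
  (Matrix.diagonal dl)⁻¹ * δ.transpose * Matrix.diagonal du

/-- Weighted inner product `⟨x, y⟩_k := xᵀ D_k B_k⁻¹ y` on `C^k`. -/
noncomputable def wip {n : ℕ} (dv bv : Fin n → ℝ) (x y : Fin n → ℝ) : ℝ :=
  x ⬝ᵥ ((Matrix.diagonal dv * (Matrix.diagonal bv)⁻¹) *ᵥ y)

/-!
Equip `C^k` with the bilinear form `⟨x, y⟩_k = xᵀ D_k B_k⁻¹ y`. For it `d_k` and `d_k^*` are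
adjoint, so, the forms being anisotropic, `ker (d0 d0^*) = ker d0^*` and
`ker (d1^* d1) = ker d1`. As `d1 d0 = 0`, the images of `d0` and `d1^*` meet trivially, hence
`ker Δ1 = ker d1 ⊓ ker d0^*`. Finally `ker d0^*` is the orthogonal complement of
`im d0 ⊆ ker d1`, so within `ker d1` it cuts out a complement of `im d0`.
-/

open LinearMap (BilinForm IsAdjointPair)
open Module (finrank)

section Adjoint

variable {R V W : Type*} [CommSemiring R] [AddCommMonoid V] [Module R V]
  [AddCommMonoid W] [Module R W] {B : BilinForm R V} {C : BilinForm R W}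
  {f : V →ₗ[R] W} {g : W →ₗ[R] V}

theorem ker_adjoint_comp_self (h : IsAdjointPair B C f g) (hC : C.toQuadraticMap.Anisotropic) :
    LinearMap.ker (g ∘ₗ f) = LinearMap.ker f := by
  refine (LinearMap.ker_le_ker_comp f g).antisymm' fun x hx ↦ hC (f x) ?_
  calc C (f x) (f x) = B x (g (f x)) := h x (f x)
    _ = 0 := by rw [show g (f x) = 0 from hx, map_zero]

theorem ker_self_comp_adjoint (h : IsAdjointPair B C f g) (hB : B.toQuadraticMap.Anisotropic) :
    LinearMap.ker (f ∘ₗ g) = LinearMap.ker g := by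
  refine (LinearMap.ker_le_ker_comp g f).antisymm' fun x hx ↦ hB (g x) ?_
  calc B (g x) (g x) = C (f (g x)) x := (h (g x) x).symm
    _ = 0 := by rw [show f (g x) = 0 from hx, map_zero, LinearMap.zero_apply]

theorem orthogonal_range_eq_ker_adjoint (h : IsAdjointPair B C f g)
    (hB : B.toQuadraticMap.Anisotropic) :
    C.orthogonal (LinearMap.range f) = LinearMap.ker g := by
  ext x
  refine ⟨fun hx ↦ hB (g x) ?_, ?_⟩
  · exact (h (g x) x).symm.trans (hx _ (LinearMap.mem_range_self f (g x)))
  · rintro hx _ ⟨z, rfl⟩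
    rw [LinearMap.mem_ker] at hx
    rw [h z x, hx, map_zero]

theorem disjoint_range_range_adjoint {U : Type*} [AddCommMonoid U] [Module R U] {e : U →ₗ[R] V}
    (h : IsAdjointPair B C f g) (hB : B.toQuadraticMap.Anisotropic) (hfe : f ∘ₗ e = 0) :
    Disjoint (LinearMap.range e) (LinearMap.range g) := by
  rw [Submodule.disjoint_def]
  rintro _ ⟨z, rfl⟩ ⟨y, hy⟩
  have hker : y ∈ LinearMap.ker (f ∘ₗ g) := by
    rw [LinearMap.mem_ker, LinearMap.comp_apply, hy, ← LinearMap.comp_apply, hfe,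
      LinearMap.zero_apply]
  rw [ker_self_comp_adjoint h hB] at hker
  exact hy.symm.trans hker

end Adjoint

theorem ker_add_of_disjoint_range {R V W : Type*} [Ring R] [AddCommGroup V] [Module R V]
    [AddCommGroup W] [Module R W] {f g : V →ₗ[R] W}
    (h : Disjoint (LinearMap.range f) (LinearMap.range g)) :
    LinearMap.ker (f + g) = LinearMap.ker f ⊓ LinearMap.ker g := by
  have hsum : f + g = f.coprod g ∘ₗ LinearMap.id.prod LinearMap.id := by ext; simp
  rw [hsum, LinearMap.ker_comp, LinearMap.ker_coprod_of_disjoint_range f g h]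
  rfl

section Complement

variable {K V : Type*} [Field K] [AddCommGroup V] [Module K V]

theorem isCompl_orthogonal_of_anisotropic [FiniteDimensional K V] {B : BilinForm K V}
    (hB : B.toQuadraticMap.Anisotropic) (W : Submodule K V) : IsCompl W (B.orthogonal W) := by
  have hdisj : Disjoint W (B.orthogonal W) :=
    Submodule.disjoint_def.mpr fun x hx hx' ↦ hB x (hx' x hx)
  have hdim := BilinForm.finrank_add_finrank_orthogonal' (B := B) W
  exact (Submodule.isCompl_iff_disjoint _ _ (hdim ▸ Nat.le_add_right _ _)).mpr hdisj

theorem finrank_inf_add_finrank_of_isCompl_of_le {U U' W : Submodule K V} [FiniteDimensional K W]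
    (h : IsCompl U U') (hUW : U ≤ W) : finrank K ↥(W ⊓ U') + finrank K U = finrank K W := by
  have hW := Submodule.finrank_add_eq_of_isCompl
    (Submodule.isCompl_comap_subtype_of_isCompl_of_le h hUW)
  rwa [← Submodule.finrank_map_subtype_eq, ← Submodule.finrank_map_subtype_eq,
    Submodule.map_comap_subtype, Submodule.map_comap_subtype, inf_eq_right.mpr hUW,
    add_comm] at hW

end Complement

section Hodge

variable {R V₀ V₁ V₂ : Type*} [CommRing R] [AddCommGroup V₀] [Module R V₀] [AddCommGroup V₁]
  [Module R V₁] [AddCommGroup V₂] [Module R V₂]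

/-- The degree-one Hodge Laplacian of the sequence `V₀ → V₁ → V₂` with maps `d₀` and `d₁`. The
codifferentials `d₀'` and `d₁'` are arbitrary maps; their adjointness to `d₀` and `d₁` is a
hypothesis of the lemmas that need it. -/
def hodgeLaplacian (d₀ : V₀ →ₗ[R] V₁) (d₀' : V₁ →ₗ[R] V₀) (d₁ : V₁ →ₗ[R] V₂)
    (d₁' : V₂ →ₗ[R] V₁) : V₁ →ₗ[R] V₁ :=
  d₀ ∘ₗ d₀' + d₁' ∘ₗ d₁

theorem ker_hodgeLaplacian {B₀ : BilinForm R V₀} {B₁ : BilinForm R V₁} {B₂ : BilinForm R V₂}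
    {d₀ : V₀ →ₗ[R] V₁} {d₀' : V₁ →ₗ[R] V₀} {d₁ : V₁ →ₗ[R] V₂} {d₁' : V₂ →ₗ[R] V₁}
    (h₀ : IsAdjointPair B₀ B₁ d₀ d₀') (h₁ : IsAdjointPair B₁ B₂ d₁ d₁')
    (hB₀ : B₀.toQuadraticMap.Anisotropic) (hB₁ : B₁.toQuadraticMap.Anisotropic)
    (hB₂ : B₂.toQuadraticMap.Anisotropic) (hd : d₁ ∘ₗ d₀ = 0) :
    LinearMap.ker (hodgeLaplacian d₀ d₀' d₁ d₁') = LinearMap.ker d₁ ⊓ LinearMap.ker d₀' := by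
  have hdisj : Disjoint (LinearMap.range (d₀ ∘ₗ d₀')) (LinearMap.range (d₁' ∘ₗ d₁)) :=
    (disjoint_range_range_adjoint h₁ hB₁ hd).mono (LinearMap.range_comp_le_range _ _)
      (LinearMap.range_comp_le_range _ _)
  rw [hodgeLaplacian, ker_add_of_disjoint_range hdisj, ker_self_comp_adjoint h₀ hB₀,
    ker_adjoint_comp_self h₁ hB₂, inf_comm]

end Hodge

theorem finrank_ker_hodgeLaplacian {K V₀ V₁ V₂ : Type*} [Field K] [AddCommGroup V₀] [Module K V₀]
    [AddCommGroup V₁] [Module K V₁] [FiniteDimensional K V₁] [AddCommGroup V₂] [Module K V₂]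
    {B₀ : BilinForm K V₀} {B₁ : BilinForm K V₁} {B₂ : BilinForm K V₂}
    {d₀ : V₀ →ₗ[K] V₁} {d₀' : V₁ →ₗ[K] V₀} {d₁ : V₁ →ₗ[K] V₂} {d₁' : V₂ →ₗ[K] V₁}
    (h₀ : IsAdjointPair B₀ B₁ d₀ d₀') (h₁ : IsAdjointPair B₁ B₂ d₁ d₁')
    (hB₀ : B₀.toQuadraticMap.Anisotropic) (hB₁ : B₁.toQuadraticMap.Anisotropic)
    (hB₂ : B₂.toQuadraticMap.Anisotropic) (hd : d₁ ∘ₗ d₀ = 0) :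
    finrank K (LinearMap.ker (hodgeLaplacian d₀ d₀' d₁ d₁')) =
      finrank K (LinearMap.ker d₁) - finrank K (LinearMap.range d₀) := by
  rw [ker_hodgeLaplacian h₀ h₁ hB₀ hB₁ hB₂ hd, ← orthogonal_range_eq_ker_adjoint h₀ hB₀]
  exact Nat.eq_sub_of_add_eq <| finrank_inf_add_finrank_of_isCompl_of_le
    (isCompl_orthogonal_of_anisotropic hB₁ _) (LinearMap.range_le_ker_iff.mpr hd)

section Diagonal

variable {ι : Type*} [Fintype ι] [DecidableEq ι]

theorem inv_diagonal_of_ne_zero {K : Type*} [Field K] {v : ι → K} (hv : ∀ i, v i ≠ 0) :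
    (diagonal v)⁻¹ = diagonal fun i ↦ (v i)⁻¹ := by
  refine Matrix.inv_eq_left_inv ?_
  simp only [Matrix.diagonal_mul_diagonal, inv_mul_cancel₀ (hv _), Matrix.diagonal_one]

theorem diagonal_mul_diagonal_mul_inv_cancel {R : Type*} [CommRing R] {v : ι → R} (w : ι → R)
    (hv : IsUnit (diagonal v).det) :
    diagonal v * diagonal w * (diagonal v)⁻¹ = diagonal w := by
  rw [(Matrix.commute_diagonal v w).eq, Matrix.mul_nonsing_inv_cancel_right _ _ hv]

end Diagonal

/-- The weighted inner product `wip dv bv` as a bilinear form, so that Mathlib's notions of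
anisotropic form and adjoint pair apply to it. -/
noncomputable def wipForm {n : ℕ} (dv bv : Fin n → ℝ) : BilinForm ℝ (Fin n → ℝ) :=
  Matrix.toLinearMap₂' ℝ (diagonal dv * (diagonal bv)⁻¹)

theorem wipForm_anisotropic {n : ℕ} {dv bv : Fin n → ℝ} (h : ∀ i, 0 < dv i * bv i) :
    (wipForm dv bv).toQuadraticMap.Anisotropic := by
  have hinv : (diagonal bv)⁻¹ = diagonal fun i ↦ (bv i)⁻¹ :=
    inv_diagonal_of_ne_zero fun i ↦ right_ne_zero_of_mul (h i).ne'
  have hpos : ∀ i, 0 < dv i * (bv i)⁻¹ := fun i ↦ by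
    simpa only [div_eq_mul_inv] using (div_pos_iff.trans mul_pos_iff.symm).mpr (h i)
  rw [wipForm, hinv, Matrix.diagonal_mul_diagonal]
  exact (Matrix.PosDef.diagonal hpos).toQuadraticForm'.anisotropic

theorem isUnit_det_of_wipForm_anisotropic {n : ℕ} {dv bv : Fin n → ℝ}
    (h : (wipForm dv bv).toQuadraticMap.Anisotropic) :
    IsUnit (diagonal dv).det ∧ IsUnit (diagonal bv).det := by
  have hdet : (diagonal dv * (diagonal bv)⁻¹).det ≠ 0 :=
    LinearMap.separatingLeft_toLinearMap₂'_iff_det_ne_zero.mp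
      (LinearMap.BilinForm.separatingLeft_of_anisotropic h)
  rw [Matrix.det_mul, mul_ne_zero_iff, ← isUnit_iff_ne_zero, ← isUnit_iff_ne_zero] at hdet
  exact ⟨hdet.1, Matrix.isUnit_nonsing_inv_det_iff.mp hdet.2⟩

theorem dd_mul_dd {l m n : ℕ} (δ' : Matrix (Fin l) (Fin m) ℝ) (δ : Matrix (Fin m) (Fin n) ℝ)
    {bl : Fin n → ℝ} {bm : Fin m → ℝ} {bu : Fin l → ℝ} (hbm : IsUnit (diagonal bm).det) :
    dd δ' bm bu * dd δ bl bm = dd (δ' * δ) bl bu := by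
  simp only [dd, Matrix.mul_assoc, Matrix.nonsing_inv_mul_cancel_left _ _ hbm]

theorem isAdjointPair_dd_dds {m n : ℕ} (δ : Matrix (Fin m) (Fin n) ℝ) {dl : Fin n → ℝ}
    (bl : Fin n → ℝ) (du : Fin m → ℝ) {bu : Fin m → ℝ} (hdl : IsUnit (diagonal dl).det)
    (hbu : IsUnit (diagonal bu).det) :
    IsAdjointPair (wipForm dl bl) (wipForm du bu) (dd δ bl bu).mulVecLin
      (dds δ dl du).mulVecLin := by
  have hadj : Matrix.IsAdjointPair (diagonal dl * (diagonal bl)⁻¹)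
      (diagonal du * (diagonal bu)⁻¹) (dd δ bl bu) (dds δ dl du) := by
    have hl : diagonal dl * (diagonal bl)⁻¹ * (diagonal dl)⁻¹ = (diagonal bl)⁻¹ := by
      rw [Matrix.inv_diagonal bl, diagonal_mul_diagonal_mul_inv_cancel _ hdl]
    calc (diagonal bu * δ * (diagonal bl)⁻¹)ᵀ * (diagonal du * (diagonal bu)⁻¹)
        = (diagonal bl)⁻¹ * δᵀ * (diagonal bu * diagonal du * (diagonal bu)⁻¹) := by
          simp only [Matrix.transpose_mul, Matrix.transpose_nonsing_inv,
            Matrix.diagonal_transpose, Matrix.mul_assoc]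
      _ = diagonal dl * (diagonal bl)⁻¹ * (diagonal dl)⁻¹ * δᵀ * diagonal du := by
          rw [diagonal_mul_diagonal_mul_inv_cancel _ hbu, hl]
      _ = diagonal dl * (diagonal bl)⁻¹ * ((diagonal dl)⁻¹ * δᵀ * diagonal du) := by
          simp only [Matrix.mul_assoc]
  exact (isAdjointPair_toLinearMap₂' _ _ _ _).mpr hadj

theorem ddec_hodge_laplacian_kernel_dim_general {n0 n1 n2 : ℕ}
    {δ0 : Matrix (Fin n1) (Fin n0) ℝ} {δ1 : Matrix (Fin n2) (Fin n1) ℝ} (hδ : δ1 * δ0 = 0)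
    {bv0 dv0 : Fin n0 → ℝ} {bv1 dv1 : Fin n1 → ℝ} {bv2 dv2 : Fin n2 → ℝ}
    (h0 : (wipForm dv0 bv0).toQuadraticMap.Anisotropic)
    (h1 : (wipForm dv1 bv1).toQuadraticMap.Anisotropic)
    (h2 : (wipForm dv2 bv2).toQuadraticMap.Anisotropic) :
    finrank ℝ (LinearMap.ker (dd δ0 bv0 bv1 * dds δ0 dv0 dv1 +
        dds δ1 dv1 dv2 * dd δ1 bv1 bv2).mulVecLin) =
      finrank ℝ (LinearMap.ker (dd δ1 bv1 bv2).mulVecLin) -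
      finrank ℝ (LinearMap.range (dd δ0 bv0 bv1).mulVecLin) := by
  obtain ⟨hd0, -⟩ := isUnit_det_of_wipForm_anisotropic h0
  obtain ⟨hd1, hb1⟩ := isUnit_det_of_wipForm_anisotropic h1
  obtain ⟨-, hb2⟩ := isUnit_det_of_wipForm_anisotropic h2
  have hdd : (dd δ1 bv1 bv2).mulVecLin ∘ₗ (dd δ0 bv0 bv1).mulVecLin = 0 := by
    rw [← Matrix.mulVecLin_mul, dd_mul_dd δ1 δ0 hb1, hδ]
    simp [dd]
  rw [mulVecLin_add, mulVecLin_mul, mulVecLin_mul]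
  exact finrank_ker_hodgeLaplacian (isAdjointPair_dd_dds δ0 bv0 dv1 hd0 hb1)
    (isAdjointPair_dd_dds δ1 bv1 dv2 hd1 hb2) h0 h1 h2 hdd

/-- The dimension of the null space of the data-driven Hodge Laplacian equals the dimension of
the corresponding homology: `dim ker(Δ1) = dim ker(d1) − dim im(d0)` (the dimension of the
quotient `ker(d1)/im(d0)`, since `im(d0) ⊆ ker(d1)`). -/
theorem ddec_hodge_laplacian_kernel_dim
    (n0 n1 n2 : ℕ) (hn0 : 0 < n0) (hn1 : 0 < n1) (hn2 : 0 < n2)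
    (δ0 : Matrix (Fin n1) (Fin n0) ℝ) (δ1 : Matrix (Fin n2) (Fin n1) ℝ)
    (hδ : δ1 * δ0 = 0)
    (bv0 : Fin n0 → ℝ) (bv1 : Fin n1 → ℝ) (bv2 : Fin n2 → ℝ)
    (hb0 : ∀ i, 0 < bv0 i) (hb1 : ∀ i, 0 < bv1 i) (hb2 : ∀ i, 0 < bv2 i)
    (dv0 : Fin n0 → ℝ) (dv1 : Fin n1 → ℝ) (dv2 : Fin n2 → ℝ)
    (hd0 : ∀ i, 0 < dv0 i) (hd1 : ∀ i, 0 < dv1 i) (hd2 : ∀ i, 0 < dv2 i)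
    :
    Module.finrank ℝ
        (LinearMap.ker ((dd δ0 bv0 bv1 * dds δ0 dv0 dv1 +
          dds δ1 dv1 dv2 * dd δ1 bv1 bv2).mulVecLin)) =
      Module.finrank ℝ (LinearMap.ker (dd δ1 bv1 bv2).mulVecLin) -
      Module.finrank ℝ (LinearMap.range (dd δ0 bv0 bv1).mulVecLin) := by
  exact ddec_hodge_laplacian_kernel_dim_general hδ
    (wipForm_anisotropic fun i ↦ mul_pos (hd0 i) (hb0 i))
    (wipForm_anisotropic fun i ↦ mul_pos (hd1 i) (hb1 i))
    (wipForm_anisotropic fun i ↦ mul_pos (hd2 i) (hb2 i))
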